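/- arXiv:2605.07523 — 3 statements merged into one kernel-verified Lean document; each statement's English description precedes it below -/
import Mathlib

section
/- Let S be a finite nonempty point set in ℝ² with staircase C(S), and let p_a, p_b ∈ ℝ² be two points. Let I_{p_a} = {c ∈ C(S) : p_a dominates c} and I_{p_b} = {c ∈ C(S) : p_b dominates c}, and suppose both sets are nonempty, I_{p_a} ∩ I_{p_b} = ∅, and some point of I_{p_a} has x-coordinate at most the x-coordinate of some point of I_{p_b}. Then there exists a point s ∈ S lying on C(S) that is dominated by neither p_a nor p_b and satisfies c.x ≤ s.x for every c ∈ I_{p_a} and s.x ≤ c'.x for every c' ∈ I_{p_b}; that is, there is a maximal point of S on the staircase between the two dominated intervals. -/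
/-- An axis-aligned rectangle `[x₁,x₂] × [y₁,y₂]` with `x₁ ≤ x₂` and `y₁ ≤ y₂`. -/
structure Rect where
  x1 : ℝ
  x2 : ℝ
  y1 : ℝ
  y2 : ℝ
  hx : x1 ≤ x2
  hy : y1 ≤ y2

/-- The set of points of a rectangle. -/
def Rect.toSet (R : Rect) : Set (ℝ × ℝ) := Set.Icc R.x1 R.x2 ×ˢ Set.Icc R.y1 R.y2

/-- The top-right corner of a rectangle. -/
def Rect.tr (R : Rect) : ℝ × ℝ := (R.x2, R.y2)

/-- The bottom-left corner of a rectangle. -/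
def Rect.bl (R : Rect) : ℝ × ℝ := (R.x1, R.y1)

/-- A rectangle is a point region if it is degenerate in both coordinates. -/
def Rect.isPoint (R : Rect) : Prop := R.x1 = R.x2 ∧ R.y1 = R.y2

/-- The top facet `[x₁,x₂] × {y₂}` of a rectangle. -/
def Rect.topFacet (R : Rect) : Set (ℝ × ℝ) := Set.Icc R.x1 R.x2 ×ˢ ({R.y2} : Set ℝ)

/-- The right facet `{x₂} × [y₁,y₂]` of a rectangle. -/
def Rect.rightFacet (R : Rect) : Set (ℝ × ℝ) := ({R.x2} : Set ℝ) ×ˢ Set.Icc R.y1 R.y2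

/-- `p` dominates `q` if `p` lies in the open top-right quadrant of `q`. -/
def dom (p q : ℝ × ℝ) : Prop := q.1 < p.1 ∧ q.2 < p.2

/-- `p` dominates a rectangle `R` if it dominates every point of `R`. -/
def domR (p : ℝ × ℝ) (R : Rect) : Prop := ∀ q ∈ R.toSet, dom p q

/-- `P` is a realization of the family `F`. -/
def IsRealization {n : ℕ} (F : Fin n → Rect) (P : Fin n → ℝ × ℝ) : Prop :=
  ∀ i, P i ∈ (F i).toSet

/-- The outer Pareto front: indices `a` such that some point of `R_a` is dominated by no
point of any other region. -/
def OPF {n : ℕ} (F : Fin n → Rect) : Set (Fin n) :=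
  {a | ∃ p ∈ (F a).toSet, ∀ b, b ≠ a → ∀ q ∈ (F b).toSet, ¬ dom q p}

/-- The inner Pareto front: points dominated in every realization of `F`. -/
def IPF {n : ℕ} (F : Fin n → Rect) : Set (ℝ × ℝ) :=
  {p' | ∀ P : Fin n → ℝ × ℝ, IsRealization F P → ∃ i, dom (P i) p'}

/-- The degenerate rectangle consisting of a single point. -/
def pointRect (p : ℝ × ℝ) : Rect := ⟨p.1, p.1, p.2, p.2, le_rfl, le_rfl⟩

open Classical in
/-- The family `F ⊙ A`: regions with index in `A` are retrieved, i.e. replaced by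
the point region of the corresponding point of the realization `P`. -/
noncomputable def retrieve {n : ℕ} (F : Fin n → Rect) (P : Fin n → ℝ × ℝ)
    (A : Set (Fin n)) : Fin n → Rect :=
  fun i => if i ∈ A then pointRect (P i) else F i

/-- `q` witnesses an outgoing dependency of `R_a` to `R_b`:
`q ∈ R_b`, (I) the top-right corner of `R_b` does not dominate `R_a`,
(II) `q ∉ IPF F`, and (III) `q ∈ R_a` or the top-right corner of `R_a` dominates `q`. -/
def depWitness {n : ℕ} (F : Fin n → Rect) (a b : Fin n) (q : ℝ × ℝ) : Prop :=
  q ∈ (F b).toSet ∧ ¬ domR (F b).tr (F a) ∧ q ∉ IPF F ∧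
    (q ∈ (F a).toSet ∨ dom (F a).tr q)

/-- `R_a` has an outgoing dependency in `F` to `R_b`. -/
def outDep {n : ℕ} (F : Fin n → Rect) (a b : Fin n) : Prop :=
  a ≠ b ∧ ∃ q, depWitness F a b q

/-- `R_a` is independent in `F` if it has no outgoing dependency to any region. -/
def indep {n : ℕ} (F : Fin n → Rect) (a : Fin n) : Prop := ∀ b, ¬ outDep F a b

/-- The outer Pareto front of the subfamily of `F` with indices in `S`. -/
def OPFon {n : ℕ} (F : Fin n → Rect) (S : Set (Fin n)) : Set (Fin n) :=
  {a | a ∈ S ∧ ∃ p ∈ (F a).toSet, ∀ b ∈ S, b ≠ a → ∀ q ∈ (F b).toSet, ¬ dom q p}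

/-- The regions remaining after removing the first `i` layers. -/
def remaining {n : ℕ} (F : Fin n → Rect) : ℕ → Set (Fin n)
  | 0 => Set.univ
  | i + 1 => remaining F i \ OPFon F (remaining F i)

/-- The `i`-th layer (0-indexed): the outer Pareto front of what remains after
removing the previous layers. -/
def layer {n : ℕ} (F : Fin n → Rect) (i : ℕ) : Set (Fin n) := OPFon F (remaining F i)

/-- Points dominated by no point of `S`. -/
def USet (S : Set (ℝ × ℝ)) : Set (ℝ × ℝ) := {p | ∀ s ∈ S, ¬ dom s p}

/-- The staircase of `S`: the topological boundary of `USet S`. -/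
def staircase (S : Set (ℝ × ℝ)) : Set (ℝ × ℝ) := frontier (USet S)

/-- `R_a` is dominated in `F`: in every realization of `F`, the point of `R_a`
is dominated by the point of some other region. -/
def dominatedIn {n : ℕ} (F : Fin n → Rect) (a : Fin n) : Prop :=
  ∀ Q : Fin n → ℝ × ℝ, IsRealization F Q → ∃ b, b ≠ a ∧ dom (Q b) (Q a)

/-- The permutation `σ` is realizable for the intervals `[a i, b i]`. -/
def realizable (k : ℕ) (a b : Fin k → ℝ) (σ : Equiv.Perm (Fin k)) : Prop :=
  ∃ z : Fin k → ℝ, Function.Injective z ∧ (∀ i, z i ∈ Set.Icc (a i) (b i)) ∧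
    StrictMono (fun i => z (σ i))

/-- The partial order along the Pareto front of the point sequence `P`:
`a ≺ b` iff both `P a` and `P b` lie on the Pareto front of `P` and `P a`
lies strictly to the left of, or strictly above, `P b`. -/
def precRel {n : ℕ} (P : Fin n → ℝ × ℝ) (a b : Fin n) : Prop :=
  (∀ c, c ≠ a → ¬ dom (P c) (P a)) ∧ (∀ c, c ≠ b → ¬ dom (P c) (P b)) ∧
    ((P a).1 < (P b).1 ∨ (P b).2 < (P a).2)

/-! Write `q = (pa.1, pb.2)`. The ordering and disjointness hypotheses force `pa` to lie above and
to the left of `pb`, so the quadrant below `q` is exactly what `pa` and `pb` both dominate, and the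
staircase misses it. Being connected and containing points dominated by `S`, this quadrant consists
entirely of such points. The points of `S` dominating those close to `q` cannot dominate the two
given staircase points, so they are bounded, and compactness yields a point of `S` that is `≥ q`.
One with maximal coordinate sum lies on the staircase, and every staircase point of `S` that is
`≥ q` separates the two intervals. -/

lemma isClosed_lowerClosure_of_isCompact {α : Type*} [TopologicalSpace α] [Preorder α]
    [OrderClosedTopology α] {K : Set α} (hK : IsCompact K) :
    IsClosed (lowerClosure K : Set α) := by
  have : CompactSpace K := isCompact_iff_compactSpace.mp hK
  have hproj : (lowerClosure K : Set α) = Prod.snd '' {x : K × α | x.2 ≤ x.1} := by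
    ext p
    simp
  rw [hproj]
  exact isClosedMap_snd_of_compactSpace _
    (isClosed_le continuous_snd (continuous_subtype_val.comp continuous_fst))

section Staircase

open Set

variable {S : Set (ℝ × ℝ)} {c d l p q : ℝ × ℝ}

lemma dom.mono {p' q' : ℝ × ℝ} (h : dom p q) (hp : p ≤ p') (hq : q' ≤ q) : dom p' q' :=
  ⟨hq.1.trans_lt (h.1.trans_le hp.1), hq.2.trans_lt (h.2.trans_le hp.2)⟩

lemma dom.le (h : dom p q) : q ≤ p := ⟨h.1.le, h.2.le⟩

lemma exists_dom_left (p : ℝ × ℝ) : ∃ q, dom p q :=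
  ⟨(p.1 - 1, p.2 - 1), sub_one_lt p.1, sub_one_lt p.2⟩

lemma setOf_dom_left (p : ℝ × ℝ) : {q | dom p q} = Iio p.1 ×ˢ Iio p.2 := rfl

lemma mem_closure_setOf_dom_left (p : ℝ × ℝ) : p ∈ closure {q | dom p q} := by
  simp only [setOf_dom_left, closure_prod_eq, closure_Iio, Iic_prod_Iic, mem_Iic, le_rfl]

lemma isOpen_setOf_dom_left (p : ℝ × ℝ) : IsOpen {q | dom p q} :=
  isOpen_Iio.prod isOpen_Iio

lemma isOpen_setOf_dom_right (q : ℝ × ℝ) : IsOpen {p | dom p q} :=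
  isOpen_Ioi.prod isOpen_Ioi

lemma notMem_USet_iff : p ∉ USet S ↔ ∃ s ∈ S, dom s p := by
  simp only [USet, mem_ofPred_eq, not_forall, not_not, exists_prop]

lemma isClosed_USet (S : Set (ℝ × ℝ)) : IsClosed (USet S) := by
  have hcompl : (USet S)ᶜ = ⋃ s ∈ S, {p | dom s p} := by
    ext p
    simp only [mem_compl_iff, notMem_USet_iff, mem_iUnion, mem_ofPred_eq, exists_prop]
  rw [← isOpen_compl_iff, hcompl]
  exact isOpen_biUnion fun s _ => isOpen_setOf_dom_left s

lemma isUpperSet_USet (S : Set (ℝ × ℝ)) : IsUpperSet (USet S) :=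
  fun _ _ hpq hp s hs hsq => hp s hs (dom.mono hsq le_rfl hpq)

lemma mem_interior_USet_iff : c ∈ interior (USet S) ↔ ∃ p, dom c p ∧ p ∈ USet S := by
  constructor
  · intro hc
    obtain ⟨p, hpU, hcp⟩ :=
      mem_closure_iff.mp (mem_closure_setOf_dom_left c) _ isOpen_interior hc
    exact ⟨p, hcp, interior_subset hpU⟩
  · rintro ⟨p, hcp, hp⟩
    have hsub : {x | dom x p} ⊆ USet S := fun _ hx => isUpperSet_USet S (dom.le hx) hp
    exact interior_maximal hsub (isOpen_setOf_dom_right p) hcp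

lemma mem_staircase_iff : c ∈ staircase S ↔ c ∈ USet S ∧ ∀ p, dom c p → ∃ s ∈ S, dom s p := by
  simp only [staircase, (isClosed_USet S).frontier_eq, mem_sdiff, mem_interior_USet_iff,
    not_exists, not_and, notMem_USet_iff]

lemma mem_USet_of_mem_staircase (hc : c ∈ staircase S) : c ∈ USet S :=
  (mem_staircase_iff.mp hc).1

lemma nonempty_of_mem_staircase (hc : c ∈ staircase S) : S.Nonempty := by
  obtain ⟨p, hcp⟩ := exists_dom_left c
  obtain ⟨s, hs, -⟩ := (mem_staircase_iff.mp hc).2 p hcp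
  exact ⟨s, hs⟩

lemma exists_dom_of_forall_mem_staircase_not_dom (hS : S.Nonempty)
    (hq : ∀ c ∈ staircase S, ¬ dom q c) (hp : dom q p) : ∃ s ∈ S, dom s p := by
  obtain ⟨s, hs⟩ := hS
  have hconn : IsPreconnected {p | dom q p} := isPreconnected_Iio.prod isPreconnected_Iio
  have hmeet : ({p | dom q p} ∩ (USet S)ᶜ).Nonempty := by
    obtain ⟨x, hx⟩ := exists_dom_left (q ⊓ s)
    exact ⟨x, hx.mono inf_le_left le_rfl,
      notMem_USet_iff.mpr ⟨s, hs, hx.mono inf_le_right le_rfl⟩⟩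
  have hclosure : closure (USet S)ᶜ ∩ {p | dom q p} ⊆ (USet S)ᶜ := by
    rintro c ⟨hc, hqc⟩ hcU
    have hfrontier : c ∈ staircase S := by
      rw [staircase, frontier_eq_closure_inter_closure]
      exact ⟨subset_closure hcU, hc⟩
    exact hq c hfrontier hqc
  exact notMem_USet_iff.mp
    (hconn.subset_of_closure_inter_subset (isClosed_USet S).isOpen_compl hmeet hclosure hp)

lemma isCompact_inter_Ici_of_mem_USet (hS : IsClosed S) (hc : c ∈ USet S) (hd : d ∈ USet S)
    (hcq : c.1 < q.1) (hdq : d.2 < q.2) : IsCompact (S ∩ Ici q) := by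
  have hsub : S ∩ Ici q ⊆ Icc q (d.1, c.2) := fun s ⟨hs, hqs⟩ =>
    ⟨hqs, not_lt.mp fun h => hd s hs ⟨h, hdq.trans_le hqs.2⟩,
      not_lt.mp fun h => hc s hs ⟨hcq.trans_le hqs.1, h⟩⟩
  exact isCompact_Icc.of_isClosed_subset (hS.inter isClosed_Ici) hsub

lemma exists_ge_of_forall_exists_dom (hl : dom q l) (hcompact : IsCompact (S ∩ Ici l))
    (hdom : ∀ p, dom q p → ∃ s ∈ S, dom s p) : ∃ s ∈ S, q ≤ s := by
  have hsub : {p | dom q p} ⊆ lowerClosure (S ∩ Ici l) := fun p hp => by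
    obtain ⟨s, hs, hsp⟩ := hdom (p ⊔ l) ⟨max_lt hp.1 hl.1, max_lt hp.2 hl.2⟩
    exact ⟨s, ⟨hs, le_sup_right.trans hsp.le⟩, le_sup_left.trans hsp.le⟩
  obtain ⟨s, ⟨hs, -⟩, hqs⟩ :=
    closure_minimal hsub (isClosed_lowerClosure_of_isCompact hcompact)
      (mem_closure_setOf_dom_left q)
  exact ⟨s, hs, hqs⟩

lemma exists_mem_staircase_ge (hcompact : IsCompact (S ∩ Ici q)) (hne : (S ∩ Ici q).Nonempty) :
    ∃ s ∈ S, s ∈ staircase S ∧ q ≤ s := by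
  obtain ⟨s, ⟨hs, hqs⟩, hmax⟩ := hcompact.exists_isMaxOn hne
    (continuous_fst.add continuous_snd).continuousOn
  refine ⟨s, hs, mem_staircase_iff.mpr ⟨fun t ht hts => ?_, fun p hp => ⟨s, hs, hp⟩⟩, hqs⟩
  exact (add_lt_add hts.1 hts.2).not_ge (hmax ⟨ht, hqs.trans hts.le⟩)

lemma exists_mem_staircase_ge_of_forall_not_dom (hS : IsClosed S) (hc : c ∈ staircase S)
    (hd : d ∈ staircase S) (hcq : c.1 < q.1) (hdq : d.2 < q.2)
    (hq : ∀ c ∈ staircase S, ¬ dom q c) : ∃ s ∈ S, s ∈ staircase S ∧ q ≤ s := by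
  have hcompact : ∀ {l : ℝ × ℝ}, c.1 < l.1 → d.2 < l.2 → IsCompact (S ∩ Ici l) :=
    isCompact_inter_Ici_of_mem_USet hS (mem_USet_of_mem_staircase hc)
      (mem_USet_of_mem_staircase hd)
  obtain ⟨x, hcx, hxq⟩ := exists_between hcq
  obtain ⟨y, hdy, hyq⟩ := exists_between hdq
  obtain ⟨s, hs, hqs⟩ := exists_ge_of_forall_exists_dom (l := (x, y)) ⟨hxq, hyq⟩
    (hcompact hcx hdy) fun _ =>
      exists_dom_of_forall_mem_staircase_not_dom (nonempty_of_mem_staircase hc) hq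
  exact exists_mem_staircase_ge (hcompact hcq hdq) ⟨s, hs, hqs⟩

end Staircase

theorem stmt4_general {S : Set (ℝ × ℝ)} (hS : IsClosed S) (pa pb : ℝ × ℝ)
    (hdisj : ∀ c ∈ staircase S, ¬ (dom pa c ∧ dom pb c))
    (horder : ∃ c ∈ staircase S, ∃ c' ∈ staircase S, dom pa c ∧ dom pb c' ∧ c.1 ≤ c'.1) :
    ∃ s ∈ S, s ∈ staircase S ∧ ¬ dom pa s ∧ ¬ dom pb s ∧
      (∀ c ∈ staircase S, dom pa c → c.1 ≤ s.1) ∧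
      (∀ c' ∈ staircase S, dom pb c' → s.1 ≤ c'.1) := by
  obtain ⟨c, hc, d, hd, hac, hbd, hcd⟩ := horder
  have hba : pb.2 < pa.2 :=
    (not_lt.mp fun h => hdisj c hc ⟨hac, hcd.trans_lt hbd.1, h⟩).trans_lt hac.2
  have hab : pa.1 < pb.1 :=
    (not_lt.mp fun h => hdisj d hd ⟨⟨h, hbd.2.trans hba⟩, hbd⟩).trans_lt hbd.1
  have hq : ∀ e ∈ staircase S, ¬ dom (pa.1, pb.2) e := fun e he hqe =>
    hdisj e he ⟨hqe.mono ⟨le_rfl, hba.le⟩ le_rfl, hqe.mono ⟨hab.le, le_rfl⟩ le_rfl⟩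
  obtain ⟨s, hs, hsC, has, hbs⟩ :=
    exists_mem_staircase_ge_of_forall_not_dom (q := (pa.1, pb.2)) hS hc hd hac.1 hbd.2 hq
  refine ⟨s, hs, hsC, fun h => h.1.not_ge has, fun h => h.2.not_ge hbs,
    fun e _ hae => hae.1.le.trans has, fun e he hbe => not_lt.mp fun hes => ?_⟩
  exact mem_USet_of_mem_staircase he s hs ⟨hes, hbe.2.trans_le hbs⟩

/-- If the staircase intervals dominated by `p_a` and by `p_b` are nonempty,
disjoint, and the first lies (partly) to the left of the second, then there is a maximal
point of `S` on the staircase between the two dominated intervals. -/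
theorem stmt4 (S : Finset (ℝ × ℝ)) (hS : S.Nonempty) (pa pb : ℝ × ℝ)
    (hIa : ∃ c ∈ staircase (S : Set (ℝ × ℝ)), dom pa c)
    (hIb : ∃ c ∈ staircase (S : Set (ℝ × ℝ)), dom pb c)
    (hdisj : ∀ c ∈ staircase (S : Set (ℝ × ℝ)), ¬ (dom pa c ∧ dom pb c))
    (horder : ∃ c ∈ staircase (S : Set (ℝ × ℝ)), ∃ c' ∈ staircase (S : Set (ℝ × ℝ)),
      dom pa c ∧ dom pb c' ∧ c.1 ≤ c'.1) :
    ∃ s ∈ S, s ∈ staircase (S : Set (ℝ × ℝ)) ∧ ¬ dom pa s ∧ ¬ dom pb s ∧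
      (∀ c ∈ staircase (S : Set (ℝ × ℝ)), dom pa c → c.1 ≤ s.1) ∧
      (∀ c' ∈ staircase (S : Set (ℝ × ℝ)), dom pb c' → s.1 ≤ c'.1) :=
  stmt4_general S.finite_toSet.isClosed pa pb hdisj horder
end

section
/- Let F⁰ be a finite family of axis-aligned rectangles and let R_a, R_b ∈ F⁰ be distinct regions. Then R_a has an outgoing dependency in F⁰ to R_b if and only if there is a point q lying on the top facet or the right facet of R_b such that (I) the top-right corner of R_b does not dominate R_a, (II) q ∉ IPF(F⁰), and (III) q ∈ R_a or the top-right corner of R_a dominates q. -/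
/-!
Conditions (I) and (II) survive replacing a witness `q` by any `q' ≥ q`: (I) does not mention the
witness, and `IPF` is a lower set. So it is enough to move `q ∈ R_b` up and to the right onto a
facet of `R_b` while keeping (III). The natural target is the componentwise minimum of the two
top-right corners, which lies on a facet by (I); it satisfies (III) if it belongs to `R_a`.
It can fail to belong to `R_a` only if `q ∉ R_a` and the corner of `R_b` lies strictly to the left
of, or strictly below, the corner of `R_a`; then moving `q` only horizontally, or only vertically,
keeps it dominated by the corner of `R_a`.
-/

theorem dom.trans_ge {p q r : ℝ × ℝ} (hp : dom p q) (hr : r ≤ q) : dom p r :=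
  ⟨hr.1.trans_lt hp.1, hr.2.trans_lt hp.2⟩

theorem isLowerSet_IPF {n : ℕ} (F : Fin n → Rect) : IsLowerSet (IPF F) :=
  fun _ _ hle hq P hP => (hq P hP).imp fun _ hi => hi.trans_ge hle

namespace Rect

variable {A B R : Rect} {p q : ℝ × ℝ}

theorem toSet_eq_Icc (R : Rect) : R.toSet = Set.Icc R.bl R.tr :=
  Set.Icc_prod_Icc R.x1 R.x2 R.y1 R.y2

theorem mem_toSet_iff : q ∈ R.toSet ↔ R.bl ≤ q ∧ q ≤ R.tr := by
  rw [toSet_eq_Icc, Set.mem_Icc]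

theorem tr_mem_toSet (R : Rect) : R.tr ∈ R.toSet :=
  mem_toSet_iff.2 ⟨⟨R.hx, R.hy⟩, le_rfl⟩

theorem domR_iff_dom_tr : domR p R ↔ dom p R.tr :=
  ⟨fun h => h _ R.tr_mem_toSet, fun h _ hq => h.trans_ge (mem_toSet_iff.1 hq).2⟩

theorem mem_topFacet_union_rightFacet_iff :
    q ∈ R.topFacet ∪ R.rightFacet ↔ q ∈ R.toSet ∧ ¬ dom R.tr q := by
  have hx := R.hx
  have hy := R.hy
  simp only [topFacet, rightFacet, toSet, tr, dom, Set.mem_union, Set.mem_prod, Set.mem_Icc,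
    Set.mem_singleton_iff]
  grind

theorem inf_tr_mem_topFacet_union_rightFacet (hqB : q ∈ B.toSet) (hqA : q ≤ A.tr)
    (hBA : ¬ domR B.tr A) : A.tr ⊓ B.tr ∈ B.topFacet ∪ B.rightFacet := by
  obtain ⟨hbl, htr⟩ := mem_toSet_iff.1 hqB
  refine mem_topFacet_union_rightFacet_iff.2
    ⟨mem_toSet_iff.2 ⟨hbl.trans (le_inf hqA htr), inf_le_right⟩, fun hdom => hBA ?_⟩
  exact domR_iff_dom_tr.2 ⟨by simpa using hdom.1, by simpa using hdom.2⟩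

theorem exists_ge_mem_facet_of_mem (hqB : q ∈ B.toSet) (hBA : ¬ domR B.tr A)
    (hqA : q ∈ A.toSet) :
    ∃ q' ∈ B.topFacet ∪ B.rightFacet, q ≤ q' ∧ q' ∈ A.toSet := by
  obtain ⟨hbl, htr⟩ := mem_toSet_iff.1 hqA
  have hle : q ≤ A.tr ⊓ B.tr := le_inf htr (mem_toSet_iff.1 hqB).2
  exact ⟨A.tr ⊓ B.tr, inf_tr_mem_topFacet_union_rightFacet hqB htr hBA, hle,
    mem_toSet_iff.2 ⟨hbl.trans hle, inf_le_left⟩⟩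

theorem exists_ge_mem_facet_of_dom (hqB : q ∈ B.toSet) (hBA : ¬ domR B.tr A)
    (hqA : dom A.tr q) :
    ∃ q' ∈ B.topFacet ∪ B.rightFacet, q ≤ q' ∧ (q' ∈ A.toSet ∨ dom A.tr q') := by
  by_cases hle : A.tr ≤ B.tr
  · have hq : q ≤ A.tr := ⟨hqA.1.le, hqA.2.le⟩
    have hfacet := inf_tr_mem_topFacet_union_rightFacet hqB hq hBA
    rw [inf_eq_left.2 hle] at hfacet
    exact ⟨A.tr, hfacet, hq, Or.inl A.tr_mem_toSet⟩
  · obtain hlt | hlt : B.x2 < A.x2 ∨ B.y2 < A.y2 := by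
      simpa only [tr, Prod.mk_le_mk, not_and_or, not_le] using hle
    · exact ⟨(B.x2, q.2), Or.inr ⟨rfl, hqB.2⟩, ⟨hqB.1.2, le_rfl⟩, Or.inr ⟨hlt, hqA.2⟩⟩
    · exact ⟨(q.1, B.y2), Or.inl ⟨hqB.1, rfl⟩, ⟨le_rfl, hqB.2.2⟩, Or.inr ⟨hqA.1, hlt⟩⟩

theorem exists_ge_mem_facet (hqB : q ∈ B.toSet) (hBA : ¬ domR B.tr A)
    (hqA : q ∈ A.toSet ∨ dom A.tr q) :
    ∃ q' ∈ B.topFacet ∪ B.rightFacet, q ≤ q' ∧ (q' ∈ A.toSet ∨ dom A.tr q') := by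
  obtain hmem | hdom := hqA
  · obtain ⟨q', hfacet, hle, hmem'⟩ := exists_ge_mem_facet_of_mem hqB hBA hmem
    exact ⟨q', hfacet, hle, Or.inl hmem'⟩
  · exact exists_ge_mem_facet_of_dom hqB hBA hdom

end Rect

/-- `R_a` has an outgoing dependency to `R_b` iff some point on the top or
right facet of `R_b` satisfies conditions (I)-(III). -/
theorem stmt9 {n : ℕ} (F : Fin n → Rect) (a b : Fin n) (hab : a ≠ b) :
    outDep F a b ↔
      ∃ q ∈ (F b).topFacet ∪ (F b).rightFacet,
        ¬ domR (F b).tr (F a) ∧ q ∉ IPF F ∧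
          (q ∈ (F a).toSet ∨ dom (F a).tr q) := by
  constructor
  · rintro ⟨-, q, hqB, hI, hII, hIII⟩
    obtain ⟨q', hfacet, hle, hIII'⟩ := Rect.exists_ge_mem_facet hqB hI hIII
    have hII' : q' ∉ IPF F := fun hq' => hII (isLowerSet_IPF F hle hq')
    exact ⟨q', hfacet, hI, hII', hIII'⟩
  · rintro ⟨q, hfacet, hq⟩
    exact ⟨hab, q, (Rect.mem_topFacet_union_rightFacet_iff.1 hfacet).1, hq⟩
end

section
/- Let k ≥ 1 and m ≥ 1 be given, and let [a₁,b₁], …, [a_k,b_k] be closed real intervals with [aᵢ,bᵢ] ⊆ [0,m] and bᵢ − aᵢ ≥ 1 for all i. Let Z be the set of realizable permutations of {1,…,k}. Then ∑_{i=1}^{k} log₂(bᵢ − aᵢ) ≤ log₂|Z| + k·log₂(e·m/k). -/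
/-!
Up to a null set, the box `∏ᵢ [aᵢ, bᵢ]` is covered by the order chambers
`z_{σ(1)} < ⋯ < z_{σ(k)}` of the realizable permutations `σ`. Permuting coordinates preserves the
product measure on the cube `[0, m]ᵏ`, so each of the `k!` chambers takes up `mᵏ / k!` of it.
Hence `∏ᵢ (bᵢ - aᵢ) ≤ |Z| mᵏ / k! ≤ |Z| (e m / k)ᵏ`, the last step because `kᵏ / k!` is a term of
the series of `eᵏ`.
-/

open MeasureTheory Set Function

open scoped Nat ENNReal

section DistinctCoordinates

variable {ι α : Type*} [Fintype ι] [MeasurableSpace α] [MeasurableEq α]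
  (μ : ι → Measure α) [∀ i, SigmaFinite (μ i)]

theorem ae_pi_eval_ne_eval {i j : ι} (hij : i ≠ j) [NullSingletonClass (μ j)] :
    ∀ᵐ z ∂Measure.pi μ, z i ≠ z j := by
  classical
  let i' : {l // l ≠ j} := ⟨i, hij⟩
  let j' : {l // ¬ l ≠ j} := ⟨j, not_not.2 rfl⟩
  have : NullSingletonClass (μ j') := ‹NullSingletonClass (μ j)›
  -- Fubini: with all coordinates other than `j` fixed, `z j = z i` cuts out a null hyperplane.
  refine (measurePreserving_piEquivPiSubtypeProd μ (· ≠ j)).quasiMeasurePreserving.ae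
    (p := fun w ↦ w.1 i' ≠ w.2 j') ?_
  refine (Measure.ae_prod_iff_ae_ae ?_).2 (.of_forall fun x ↦ ?_)
  · exact (measurableSet_eq_fun (by fun_prop) (by fun_prop)).compl
  · simpa only [ne_comm] using Measure.ae_eval_ne (fun l : {l // ¬ l ≠ j} ↦ μ l) j' (x i')

theorem ae_pi_injective [∀ i, NullSingletonClass (μ i)] :
    ∀ᵐ z ∂Measure.pi μ, Injective z := by
  have hne : ∀ᵐ z ∂Measure.pi μ, ∀ i j, i ≠ j → z i ≠ z j := by
    simp only [ae_all_iff]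
    exact fun i j hij ↦ ae_pi_eval_ne_eval μ hij
  filter_upwards [hne] with z hz i j
  exact not_imp_not.1 (hz i j)

end DistinctCoordinates

/-- The order chamber of a permutation `σ`: the set of tuples whose entries, listed in the order
`σ 0, σ 1, …`, are strictly increasing. Over `ℝ` these are the chambers of the braid arrangement. -/
def orderChamber {k : ℕ} (α : Type*) [Preorder α] (σ : Equiv.Perm (Fin k)) : Set (Fin k → α) :=
  {z | StrictMono (z ∘ σ)}

namespace orderChamber

variable {k : ℕ} {α : Type*}

section LinearOrder

variable [LinearOrder α] {σ : Equiv.Perm (Fin k)} {z : Fin k → α}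

theorem mem_iff : z ∈ orderChamber α σ ↔ Injective z ∧ Tuple.sort z = σ := by
  constructor
  · intro hσ
    have hz : Injective z := (σ.injective_comp z).1 (StrictMono.injective hσ)
    have hsort : z ∘ σ = z ∘ Tuple.sort z :=
      Tuple.comp_sort_eq_comp_iff_monotone.2 (StrictMono.monotone hσ)
    exact ⟨hz, Equiv.coe_fn_injective (hz.comp_left hsort.symm)⟩
  · rintro ⟨hz, rfl⟩
    exact (Tuple.monotone_sort z).strictMono_of_injective (hz.comp (Tuple.sort z).injective)

variable (k α) in
theorem pairwise_disjoint : Pairwise (Disjoint on fun σ : Equiv.Perm (Fin k) ↦ orderChamber α σ) :=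
  fun _ _ hne ↦ disjoint_left.2 fun _ hσ hτ ↦
    hne ((mem_iff.1 hσ).2.symm.trans (mem_iff.1 hτ).2)

variable (k α) in
theorem iUnion_eq : ⋃ σ : Equiv.Perm (Fin k), orderChamber α σ = {z | Injective z} := by
  ext z
  simp [mem_iff]

end LinearOrder

variable [LinearOrder α] [TopologicalSpace α] [OrderClosedTopology α]
  [SecondCountableTopology α] [MeasurableSpace α] [OpensMeasurableSpace α]

theorem measurableSet (σ : Equiv.Perm (Fin k)) : MeasurableSet (orderChamber α σ) := by
  simp only [orderChamber, StrictMono, comp_apply, ofPred_forall]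
  exact .iInter fun i ↦ .iInter fun j ↦ .iInter fun _ ↦
    measurableSet_lt (measurable_pi_apply _) (measurable_pi_apply _)

variable (μ : Measure α) [SigmaFinite μ]

theorem measure_eq_measure_one (σ : Equiv.Perm (Fin k)) :
    Measure.pi (fun _ ↦ μ) (orderChamber α σ) =
      Measure.pi (fun _ ↦ μ) (orderChamber α (1 : Equiv.Perm (Fin k))) := by
  have hσ := measurePreserving_arrowCongr' (fun _ : Fin k ↦ μ) (fun _ ↦ μ) σ.symm
    (MeasurableEquiv.refl α) fun _ ↦ .id μ
  exact hσ.measure_preimage (measurableSet 1).nullMeasurableSet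

theorem factorial_mul_measure [NullSingletonClass μ] (σ : Equiv.Perm (Fin k)) :
    k ! * Measure.pi (fun _ ↦ μ) (orderChamber α σ) = μ univ ^ k := by
  calc k ! * Measure.pi (fun _ ↦ μ) (orderChamber α σ)
      = ∑ τ : Equiv.Perm (Fin k), Measure.pi (fun _ ↦ μ) (orderChamber α τ) := by
        simp [measure_eq_measure_one μ, Fintype.card_perm]
    _ = Measure.pi (fun _ ↦ μ) (⋃ τ : Equiv.Perm (Fin k), orderChamber α τ) := by
        rw [measure_iUnion (pairwise_disjoint k α) measurableSet, tsum_fintype]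
    _ = Measure.pi (fun _ : Fin k ↦ μ) univ := by
        rw [iUnion_eq]
        exact measure_congr (Filter.eventuallyEq_univ.2 (ae_pi_injective _))
    _ = μ univ ^ k := by
        rw [Measure.pi_univ, Finset.prod_const, Finset.card_univ, Fintype.card_fin]

theorem factorial_mul_measure_le_ncard_mul_pow [NullSingletonClass μ] (s : Set (Fin k → α)) :
    k ! * Measure.pi (fun _ ↦ μ) s ≤
      {σ | (s ∩ orderChamber α σ).Nonempty}.ncard * μ univ ^ k := by
  classical
  set Z : Set (Equiv.Perm (Fin k)) := {σ | (s ∩ orderChamber α σ).Nonempty}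
  have hcover : {z | Injective z} ∩ s ⊆ ⋃ σ ∈ Z.toFinset, orderChamber α σ := by
    rintro z ⟨hz, hzs⟩
    obtain ⟨σ, hσ⟩ := mem_iUnion.1 ((iUnion_eq k α).ge hz)
    exact mem_biUnion (mem_toFinset.2 ⟨z, hzs, hσ⟩) hσ
  have hnull : Measure.pi (fun _ ↦ μ) ({z | Injective z} ∩ s) = Measure.pi (fun _ ↦ μ) s :=
    Measure.measure_inter_eq_of_ae (ae_pi_injective _)
  calc k ! * Measure.pi (fun _ ↦ μ) s
      ≤ k ! * ∑ σ ∈ Z.toFinset, Measure.pi (fun _ ↦ μ) (orderChamber α σ) := by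
        rw [← hnull]
        gcongr
        exact (measure_mono hcover).trans (measure_biUnion_finset_le _ _)
    _ = Z.ncard * μ univ ^ k := by
        simp [Finset.mul_sum, factorial_mul_measure, ncard_eq_toFinset_card']

end orderChamber

theorem realizable_iff_nonempty_inter_orderChamber {k : ℕ} {a b : Fin k → ℝ}
    {σ : Equiv.Perm (Fin k)} :
    realizable k a b σ ↔ ((univ.pi fun i ↦ Icc (a i) (b i)) ∩ orderChamber ℝ σ).Nonempty := by
  constructor
  · rintro ⟨z, -, hz, hσ⟩
    exact ⟨z, fun i _ ↦ hz i, hσ⟩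
  · rintro ⟨z, hz, hσ⟩
    exact ⟨z, (orderChamber.mem_iff.1 hσ).1, fun i ↦ hz i trivial, hσ⟩

theorem factorial_mul_prod_sub_le_ncard_realizable {k : ℕ} {a b : Fin k → ℝ} {s : Set ℝ}
    (hs : volume s ≠ ∞) (hab : ∀ i, a i ≤ b i) (hsub : ∀ i, Icc (a i) (b i) ⊆ s) :
    k ! * ∏ i, (b i - a i) ≤ {σ | realizable k a b σ}.ncard * volume.real s ^ k := by
  have hbox : Measure.pi (fun _ ↦ volume.restrict s) (univ.pi fun i ↦ Icc (a i) (b i)) =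
      ENNReal.ofReal (∏ i, (b i - a i)) := by
    rw [Measure.pi_pi, ENNReal.ofReal_prod_of_nonneg fun i _ ↦ sub_nonneg.2 (hab i)]
    simp only [Measure.restrict_eq_self _ (hsub _), Real.volume_Icc]
  have hcount := orderChamber.factorial_mul_measure_le_ncard_mul_pow (volume.restrict s)
    (univ.pi fun i ↦ Icc (a i) (b i))
  simp only [hbox, ← realizable_iff_nonempty_inter_orderChamber, Measure.restrict_apply_univ]
    at hcount
  have hprod : 0 ≤ ∏ i, (b i - a i) := Finset.prod_nonneg fun i _ ↦ sub_nonneg.2 (hab i)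
  simpa [hprod, measureReal_def] using ENNReal.toReal_mono (by finiteness) hcount

theorem pow_le_exp_one_pow_mul_factorial (k : ℕ) : (k : ℝ) ^ k ≤ Real.exp 1 ^ k * k ! := by
  rw [← div_le_iff₀ (by positivity), Real.exp_one_pow]
  exact Real.pow_div_factorial_le_exp k k.cast_nonneg k

theorem prod_sub_le_ncard_realizable_mul_pow {k : ℕ} {a b : Fin k → ℝ} {s : Set ℝ}
    (hs : volume s ≠ ∞) (hab : ∀ i, a i ≤ b i) (hsub : ∀ i, Icc (a i) (b i) ⊆ s) :
    ∏ i, (b i - a i) ≤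
      {σ | realizable k a b σ}.ncard * (Real.exp 1 * volume.real s / k) ^ k := by
  have hprod : 0 ≤ ∏ i, (b i - a i) := Finset.prod_nonneg fun i _ ↦ sub_nonneg.2 (hab i)
  rw [div_pow, ← mul_div_assoc, le_div_iff₀ (mod_cast k.pow_self_pos)]
  calc (∏ i, (b i - a i)) * (k : ℝ) ^ k
      ≤ (∏ i, (b i - a i)) * (Real.exp 1 ^ k * k !) := by
        gcongr
        exact pow_le_exp_one_pow_mul_factorial k
    _ = Real.exp 1 ^ k * (k ! * ∏ i, (b i - a i)) := by ring
    _ ≤ Real.exp 1 ^ k * ({σ | realizable k a b σ}.ncard * volume.real s ^ k) := by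
        gcongr ?_ * ?_
        exact factorial_mul_prod_sub_le_ncard_realizable hs hab hsub
    _ = {σ | realizable k a b σ}.ncard * (Real.exp 1 * volume.real s) ^ k := by ring

theorem stmt15_general (k : ℕ) (hk : 1 ≤ k) (m : ℝ) (a b : Fin k → ℝ)
    (hsub : ∀ i, Icc (a i) (b i) ⊆ Icc 0 m) (hab : ∀ i, a i < b i) :
    ∑ i, Real.logb 2 (b i - a i) ≤
      Real.logb 2 ({σ : Equiv.Perm (Fin k) | realizable k a b σ}.ncard) +
        k * Real.logb 2 (Real.exp 1 * m / k) := by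
  have hm : 0 ≤ m := nonempty_Icc.1 ((nonempty_Icc.2 (hab ⟨0, hk⟩).le).mono (hsub ⟨0, hk⟩))
  have hprod : 0 < ∏ i, (b i - a i) := Finset.prod_pos fun i _ ↦ sub_pos.2 (hab i)
  have hle : ∏ i, (b i - a i) ≤
      {σ | realizable k a b σ}.ncard * (Real.exp 1 * m / k) ^ k := by
    simpa [hm] using prod_sub_le_ncard_realizable_mul_pow measure_Icc_lt_top.ne
      (fun i ↦ (hab i).le) hsub
  have hne := (hprod.trans_le hle).ne'
  rw [← Real.logb_prod _ _ fun i _ ↦ (sub_pos.2 (hab i)).ne', ← Real.logb_pow,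
    ← Real.logb_mul (left_ne_zero_of_mul hne) (right_ne_zero_of_mul hne)]
  exact Real.logb_le_logb_of_le one_lt_two hprod hle

/-- `∑ᵢ log₂(bᵢ - aᵢ) ≤ log₂ |Z| + k·log₂(e·m/k)` for `k` intervals of
length at least `1` contained in `[0, m]`, where `Z` is the set of realizable
permutations. -/
theorem stmt15 (k : ℕ) (hk : 1 ≤ k) (m : ℝ) (hm : 1 ≤ m)
    (a b : Fin k → ℝ)
    (hsub : ∀ i, Set.Icc (a i) (b i) ⊆ Set.Icc (0 : ℝ) m)
    (hlen : ∀ i, 1 ≤ b i - a i) :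
    ∑ i, Real.logb 2 (b i - a i) ≤
      Real.logb 2 ({σ : Equiv.Perm (Fin k) | realizable k a b σ}.ncard) +
        k * Real.logb 2 (Real.exp 1 * m / k) :=
  stmt15_general k hk m a b hsub fun i ↦ sub_pos.1 (one_pos.trans_le (hlen i))
end
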